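/- arXiv:1604.00845 — 2 statements merged into one kernel-verified Lean document; each statement's English description precedes it below -/
import Mathlib

section
/- There is an absolute constant α₀ ∈ (0,1) such that the following holds. Let k ≥ 1 be an integer and let S ⊆ [n]^d with |S| ≤ 2k. Let α ∈ (0, α₀), let F ≥ 2d, and let B = b^d ≥ (2π)^{4F·d} · k/α^d with b a power of 2 dividing n. If Σ is uniform on M_{d×d} and q is uniform on [n]^d, independently, and H = (π_{Σ,q}, B, F), then every fixed i ∈ [n]^d is isolated under H with respect to S at parameter α with probability at least 1 − √α/2. -/
/- STATEMENT 3: There is an absolute constant α₀ ∈ (0,1) such that: for k ≥ 1, S ⊆ [n]^d with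
   |S| ≤ 2k, α ∈ (0,α₀), F ≥ 2d, B = b^d ≥ (2π)^{4Fd}·k/α^d (b a power of 2 dividing n),
   if Σ is uniform on M_{d×d} and q uniform on [n]^d (independently), then every fixed i ∈ [n]^d
   is isolated under H = (π_{Σ,q}, B, F) w.r.t. S at parameter α with probability ≥ 1 − √α/2. -/

open scoped BigOperators Classical
open Finset

/-- circular distance to 0 on ℤ/nℤ -/
def circAbs (n : ℕ) (t : ZMod n) : ℕ := min t.val (n - t.val)

/-- ℓ∞ norm on (ℤ/nℤ)^d w.r.t. circular distance -/
def linf {n d : ℕ} (v : Fin d → ZMod n) : ℕ := Finset.univ.sup (fun s => circAbs n (v s))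

/-- the pseudorandom spectrum permutation π_{Σ,q}(i) = Σ(i−q) -/
def fperm {n d : ℕ} (M : Matrix (Fin d) (Fin d) (ZMod n)) (q : Fin d → ZMod n)
    (i : Fin d → ZMod n) : Fin d → ZMod n := M.mulVec (i - q)

/-- the point (n/b)·h(i) ∈ [n]^d of the bucket containing v: the bucket h(i) is chosen so that
    ‖v − (n/b)·h(i)‖_∞ ≤ n/b; here nb = n/b. -/
def bucketPt {n d : ℕ} (nb : ℕ) (v : Fin d → ZMod n) : Fin d → ZMod n :=
  fun s => ((nb * ((v s).val / nb) : ℕ) : ZMod n)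

/-- ℓ∞ ball of (real) radius r around c in [n]^d -/
noncomputable def ballInf {n d : ℕ} [NeZero n] (c : Fin d → ZMod n) (r : ℝ) : Finset (Fin d → ZMod n) :=
  Finset.univ.filter (fun y => (linf (c - y) : ℝ) ≤ r)

/-- i is isolated under the hashing H = (π_{Σ,q}, b^d, F) with respect to S at parameter α:
    for every scale t ≥ 0,
    |π(S∖{i}) ∩ B^∞_{(n/b)h(i)}((n/b)·2^t)| ≤ (2π)^{−Fd}·α^{d/2}·2^{(t+1)d}·2^t. -/
noncomputable def isolatedUnder {n d : ℕ} [NeZero n] (b F : ℕ) (α : ℝ)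
    (S : Finset (Fin d → ZMod n)) (M : Matrix (Fin d) (Fin d) (ZMod n))
    (q : Fin d → ZMod n) (i : Fin d → ZMod n) : Prop :=
  ∀ t : ℕ,
    ((((S.erase i).image (fun j => fperm M q j)) ∩
        ballInf (bucketPt (n / b) (fperm M q i)) (((n : ℝ) / b) * 2 ^ t)).card : ℝ)
      ≤ ((2 * Real.pi) ^ (F * d) : ℝ)⁻¹ * α ^ ((d : ℝ) / 2) * 2 ^ ((t + 1) * d) * 2 ^ t

lemma coprime_n {n m : ℕ} (hn : n = 2 ^ m) (hm : 1 ≤ m) (y : ℕ) : y.Coprime n ↔ Odd y := by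
  rw [hn, Nat.coprime_pow_right_iff (by omega), Nat.coprime_comm, Nat.coprime_two_left]

lemma mul_mod_n {n A N : ℕ} (h : n = A * N) (y : ℕ) : (A * y) % n = A * (y % N) := by
  rw [h, Nat.mul_mod_mul_left]

lemma sub_n {n A N : ℕ} (h : n = A * N) (y : ℕ) : n - A * y = A * (N - y) := by
  rw [h, Nat.mul_sub]

lemma odd_iff_unit {n m : ℕ} [NeZero n] (hn : n = 2 ^ m) (hm : 1 ≤ m) (x : ZMod n) :
    Odd x.val ↔ IsUnit x := by
  conv_rhs => rw [← ZMod.natCast_zmod_val x, ZMod.isUnit_iff_coprime]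
  rw [coprime_n hn hm]

lemma val_pow_mul {n m : ℕ} [NeZero n] (hn : n = 2 ^ m) {s : ℕ} (hs : s ≤ m) (x : ZMod n) :
    ((2 : ZMod n) ^ s * x).val = 2 ^ s * (x.val % 2 ^ (m - s)) := by
  have h1 : (2 : ZMod n) ^ s * x = ((2 ^ s * x.val : ℕ) : ZMod n) := by
    push_cast; rw [ZMod.natCast_zmod_val]
  have h2 : n = 2 ^ s * 2 ^ (m - s) := by rw [hn, ← pow_add]; congr 1; omega
  rw [h1, ZMod.val_natCast, mul_mod_n h2]

lemma circ_big {n m : ℕ} [NeZero n] (hn : n = 2 ^ m) {s : ℕ} (hs : s < m) (x : ZMod n)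
    (hx : Odd x.val) : 2 ^ s ≤ circAbs n ((2 : ZMod n) ^ s * x) := by
  unfold circAbs
  rw [val_pow_mul hn hs.le]
  have h2 : n = 2 ^ s * 2 ^ (m - s) := by rw [hn, ← pow_add]; congr 1; omega
  have hr : x.val % 2 ^ (m - s) < 2 ^ (m - s) := Nat.mod_lt _ (by positivity)
  have hr0 : 1 ≤ x.val % 2 ^ (m - s) := by
    rw [Nat.one_le_iff_ne_zero]
    intro h
    have : 2 ∣ x.val := (dvd_pow_self 2 (by omega)).trans (Nat.dvd_of_mod_eq_zero h)
    rcases hx with ⟨c, hc⟩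
    omega
  refine le_min (Nat.le_mul_of_pos_right _ hr0) ?_
  rw [sub_n h2]
  exact Nat.le_mul_of_pos_right _ (by omega)

lemma count_one {n m : ℕ} [NeZero n] (hn : n = 2 ^ m) {s : ℕ} (hs : s ≤ m) (R : ℕ)
    (hR : 2 ^ s ≤ R) :
    (univ.filter (fun x : ZMod n => circAbs n ((2 : ZMod n) ^ s * x) ≤ R)).card ≤ 3 * R := by
  have h2 : n = 2 ^ s * 2 ^ (m - s) := by rw [hn, ← pow_add]; congr 1; omega
  set N := 2 ^ (m - s) with hN
  set Q := R / 2 ^ s with hQ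
  have hNpos : 0 < N := by positivity
  have hsub : univ.filter (fun x : ZMod n => circAbs n ((2 : ZMod n) ^ s * x) ≤ R) ⊆
      ((range (2 ^ s)) ×ˢ (range (Q + 1) ∪ Ico (N - Q) N)).image
        (fun p => ((N * p.1 + p.2 : ℕ) : ZMod n)) := by
    intro x hx
    rw [mem_filter] at hx
    have hx := hx.2
    unfold circAbs at hx
    rw [val_pow_mul hn hs, ← hN] at hx
    rw [mem_image]
    have hr : x.val % N < N := Nat.mod_lt _ hNpos
    refine ⟨(x.val / N, x.val % N), ?_, ?_⟩
    · rw [mem_product]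
      constructor
      · rw [mem_range, Nat.div_lt_iff_lt_mul hNpos, ← h2]
        exact ZMod.val_lt x
      · rw [mem_union, mem_range, mem_Ico]
        rcases min_le_iff.1 hx with h | h
        · left
          have : x.val % N ≤ Q := by
            rw [hQ, Nat.le_div_iff_mul_le (by positivity)]; linarith
          omega
        · right
          have : N - x.val % N ≤ Q := by
            rw [hQ, Nat.le_div_iff_mul_le (by positivity), mul_comm, Nat.mul_sub, ← h2]
            exact h
          omega
    · simp only [Nat.div_add_mod, ZMod.natCast_zmod_val]
  refine (card_le_card hsub).trans (card_image_le.trans ?_)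
  rw [card_product, card_range]
  have h3 : (range (Q + 1) ∪ Ico (N - Q) N).card ≤ 2 * Q + 1 := by
    refine (card_union_le _ _).trans ?_
    rw [card_range, Nat.card_Ico]; omega
  have h4 : 2 ^ s * Q ≤ R := Nat.mul_div_le _ _
  nlinarith [Nat.mul_le_mul_left (2 ^ s) h3]

lemma count_all {n m d : ℕ} [NeZero n] (hn : n = 2 ^ m) {s : ℕ} (hs : s ≤ m) (R : ℕ)
    (hR : 2 ^ s ≤ R) :
    (univ.filter (fun v : Fin d → ZMod n => linf ((2 : ZMod n) ^ s • v) ≤ R)).card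
      ≤ (3 * R) ^ d := by
  have : univ.filter (fun v : Fin d → ZMod n => linf ((2 : ZMod n) ^ s • v) ≤ R) =
      Fintype.piFinset (fun _ : Fin d =>
        univ.filter (fun x : ZMod n => circAbs n ((2 : ZMod n) ^ s * x) ≤ R)) := by
    ext v
    simp [linf, Fintype.mem_piFinset]
  rw [this, Fintype.card_piFinset_const]
  exact Nat.pow_le_pow_left (count_one hn hs R hR) d

lemma decomp {n m d : ℕ} [NeZero n] (hn : n = 2 ^ m) (w : Fin d → ZMod n) (hw : w ≠ 0) :
    ∃ s < m, ∃ u : Fin d → ZMod n, w = (2 : ZMod n) ^ s • u ∧ ∃ a, IsUnit (u a) := by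
  obtain ⟨a, ha⟩ : ∃ a, w a ≠ 0 := by
    by_contra! h; exact hw (funext h)
  have hva : (w a).val ≠ 0 := by rwa [Ne, ZMod.val_eq_zero]
  have hnd : ¬ 2 ^ m ∣ (w a).val := by
    intro h
    have := Nat.le_of_dvd (by omega) h
    have := ZMod.val_lt (w a)
    omega
  have hm : m ≠ 0 := by
    rintro rfl; simp at hnd
  have hex : ∃ s, ¬ ∀ a, 2 ^ (s + 1) ∣ (w a).val :=
    ⟨m - 1, fun h => hnd (by have := h a; rwa [Nat.sub_add_cancel (by omega)] at this)⟩
  have hsp := Nat.find_spec hex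
  have hmin : ∀ a, 2 ^ (Nat.find hex) ∣ (w a).val := by
    rcases h : Nat.find hex with _ | s
    · simp
    · have := Nat.find_min hex (m := s) (by omega)
      push Not at this
      exact this
  have hle : Nat.find hex ≤ m - 1 := Nat.find_min' hex
    (fun h => hnd (by have := h a; rwa [Nat.sub_add_cancel (by omega)] at this))
  generalize Nat.find hex = s at *
  refine ⟨s, by omega, fun a => (((w a).val / 2 ^ s : ℕ) : ZMod n), ?_, ?_⟩
  · funext c
    have : ((2 ^ s * ((w c).val / 2 ^ s) : ℕ) : ZMod n) = w c := by
      rw [Nat.mul_div_cancel' (hmin c), ZMod.natCast_zmod_val]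
    simp only [Pi.smul_apply, smul_eq_mul]
    push_cast at this
    exact this.symm
  · push Not at hsp
    obtain ⟨c, hc⟩ := hsp
    refine ⟨c, ?_⟩
    rw [ZMod.isUnit_iff_coprime, coprime_n hn (by omega), ← Nat.not_even_iff_odd, even_iff_two_dvd]
    intro h
    apply hc
    rw [pow_succ]
    exact (Nat.dvd_div_iff_mul_dvd (hmin c)).1 h

/-- matrices of odd determinant -/
noncomputable def GLs (n d : ℕ) [NeZero n] : Finset (Matrix (Fin d) (Fin d) (ZMod n)) :=
  univ.filter (fun M => Odd (Matrix.det M).val)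

lemma exists_unit_col {n d : ℕ} (a : Fin d) (v : Fin d → ZMod n) (hv : IsUnit (v a)) :
    ∃ g : Matrix (Fin d) (Fin d) (ZMod n), IsUnit g.det ∧ g.mulVec (Pi.single a 1) = v := by
  refine ⟨Matrix.updateCol 1 a v, ?_, ?_⟩
  · have := Matrix.cramer_apply (1 : Matrix (Fin d) (Fin d) (ZMod n)) v a
    rw [← this, Matrix.cramer_one]
    exact hv
  · rw [Matrix.mulVec_single_one]
    ext c; simp [Matrix.col]

lemma card_le_move {n m d : ℕ} [NeZero n] (hn : n = 2 ^ m) (hm : 1 ≤ m) (a : Fin d)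
    (u v v' : Fin d → ZMod n) (hv : IsUnit (v a)) (hv' : IsUnit (v' a)) :
    ((GLs n d).filter (fun M => M.mulVec u = v)).card ≤
      ((GLs n d).filter (fun M => M.mulVec u = v')).card := by
  obtain ⟨g, hg, hgv⟩ := exists_unit_col a v hv
  obtain ⟨g', hg', hgv'⟩ := exists_unit_col a v' hv'
  have hgi : IsUnit (g⁻¹).det := by
    rw [← Matrix.isUnit_iff_isUnit_det] at hg ⊢
    exact (Matrix.isUnit_nonsing_inv_iff).2 hg
  have e1 : (g⁻¹).mulVec v = Pi.single a 1 := by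
    rw [← hgv, Matrix.mulVec_mulVec, Matrix.nonsing_inv_mul _ hg, Matrix.one_mulVec]
  apply card_le_card_of_injOn (fun M => g' * g⁻¹ * M)
  · intro M hM
    simp only [GLs, coe_filter, mem_filter, mem_univ, true_and, Set.mem_ofPred_eq,
      odd_iff_unit hn hm] at hM ⊢
    refine ⟨?_, ?_⟩
    · rw [Matrix.det_mul, Matrix.det_mul]
      exact (hg'.mul hgi).mul hM.1
    · rw [← Matrix.mulVec_mulVec, hM.2, ← Matrix.mulVec_mulVec, e1, hgv']
  · intro M _ M' _ h
    have h' : g' * g⁻¹ * M = g' * g⁻¹ * M' := h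
    have h2 := congrArg (fun X => g * (g'⁻¹ * X)) h'
    simp only [Matrix.mul_assoc, Matrix.nonsing_inv_mul_cancel_left _ _ hg',
      Matrix.mul_nonsing_inv_cancel_left _ _ hg] at h2
    exact h2

lemma card_unit {n m : ℕ} [NeZero n] (hn : n = 2 ^ m) (hm : 1 ≤ m) :
    n ≤ 2 * (univ.filter (fun x : ZMod n => IsUnit x)).card := by
  have h1 : (univ.filter (fun x : ZMod n => ¬ IsUnit x)).card ≤
      (univ.filter (fun x : ZMod n => IsUnit x)).card := by
    apply card_le_card_of_injOn (fun x => x + 1)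
    · intro x hx
      simp only [coe_filter, mem_univ, true_and, Set.mem_ofPred_eq] at hx ⊢
      rw [← odd_iff_unit hn hm, Nat.not_odd_iff_even] at hx
      have : x + 1 = ((x.val + 1 : ℕ) : ZMod n) := by push_cast; rw [ZMod.natCast_zmod_val]
      rw [this, ZMod.isUnit_iff_coprime, coprime_n hn hm]
      exact hx.add_one
    · intro x _ y _ h; simpa using h
  have h2 := card_filter_add_card_filter_not (s := (univ : Finset (ZMod n))) (fun x => IsUnit x)
  rw [card_univ, ZMod.card] at h2
  omega

lemma card_unit_vec {n m d : ℕ} [NeZero n] (hn : n = 2 ^ m) (hm : 1 ≤ m) (a : Fin d) :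
    n ^ d ≤ 2 * (univ.filter (fun v : Fin d → ZMod n => IsUnit (v a))).card := by
  have : univ.filter (fun v : Fin d → ZMod n => IsUnit (v a)) =
      Fintype.piFinset (fun c : Fin d => if c = a then univ.filter (fun x : ZMod n => IsUnit x)
        else univ) := by
    ext v
    simp only [mem_filter, mem_univ, true_and, Fintype.mem_piFinset]
    constructor
    · intro h c
      split_ifs with hc
      · subst hc; simpa using h
      · simp
    · intro h
      simpa using h a
  rw [this, Fintype.card_piFinset, ← mul_prod_erase univ _ (mem_univ a)]
  have h2 : ∏ x ∈ univ.erase a, (if x = a then univ.filter (fun x : ZMod n => IsUnit x)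
        else univ).card = n ^ (d - 1) := by
    rw [prod_congr rfl (g := fun _ => n)]
    · rw [prod_const, card_erase_of_mem (mem_univ a), card_univ, Fintype.card_fin]
    · intro x hx
      rw [if_neg (ne_of_mem_erase hx), card_univ, ZMod.card]
  rw [h2, if_pos rfl]
  have hd : d = (d - 1) + 1 := by have := a.2; omega
  conv_lhs => rw [hd, pow_succ]
  nlinarith [card_unit hn hm, Nat.zero_le (n ^ (d - 1))]

lemma card_fiber {n m d : ℕ} [NeZero n] (hn : n = 2 ^ m) (hm : 1 ≤ m) (a : Fin d)
    (u v : Fin d → ZMod n) (hv : IsUnit (v a)) :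
    n ^ d * ((GLs n d).filter (fun M => M.mulVec u = v)).card ≤ 2 * (GLs n d).card := by
  set U := univ.filter (fun v : Fin d → ZMod n => IsUnit (v a))
  have h1 : U.card * ((GLs n d).filter (fun M => M.mulVec u = v)).card ≤ (GLs n d).card := by
    calc _ = ∑ v' ∈ U, ((GLs n d).filter (fun M => M.mulVec u = v)).card := by
            rw [sum_const, smul_eq_mul]
      _ ≤ ∑ v' ∈ U, ((GLs n d).filter (fun M => M.mulVec u = v')).card :=
            sum_le_sum fun v' h => card_le_move hn hm a u v v' hv (mem_filter.1 h).2
      _ ≤ ∑ v' ∈ univ, ((GLs n d).filter (fun M => M.mulVec u = v')).card :=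
            sum_le_sum_of_subset (subset_univ _)
      _ = (GLs n d).card := (card_eq_sum_card_fiberwise (fun _ _ => by simp)).symm
  have h2 := card_unit_vec hn hm a
  calc _ ≤ (2 * U.card) * ((GLs n d).filter (fun M => M.mulVec u = v)).card :=
        Nat.mul_le_mul_right _ h2
    _ ≤ _ := by rw [mul_assoc]; exact Nat.mul_le_mul_left _ h1

lemma exists_unit_mulVec {n m d : ℕ} [NeZero n] (hn : n = 2 ^ m) (hm : 1 ≤ m)
    (M : Matrix (Fin d) (Fin d) (ZMod n)) (hM : M ∈ GLs n d) (u : Fin d → ZMod n) (a : Fin d)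
    (hu : IsUnit (u a)) : ∃ c, IsUnit (M.mulVec u c) := by
  by_contra! h
  have hM' : IsUnit M.det := by
    rw [← odd_iff_unit hn hm]; exact (mem_filter.1 hM).2
  have e : M⁻¹.mulVec (M.mulVec u) = u := by
    rw [Matrix.mulVec_mulVec, Matrix.nonsing_inv_mul _ hM', Matrix.one_mulVec]
  have hn2 : ∀ x : ZMod n, ¬ IsUnit x → (2 : ZMod n) ∣ x := by
    intro x hx
    rw [← odd_iff_unit hn hm, Nat.not_odd_iff_even, even_iff_two_dvd] at hx
    obtain ⟨c, hc⟩ := hx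
    exact ⟨(c : ZMod n), by rw [← ZMod.natCast_zmod_val x, hc]; push_cast; rfl⟩
  have h2 : (2 : ZMod n) ∣ u a := by
    rw [← e]
    simp only [Matrix.mulVec.eq_1 M⁻¹, dotProduct]
    exact dvd_sum fun c _ => (hn2 _ (h c)).mul_left _
  have h3 : IsUnit (2 : ZMod n) := isUnit_of_dvd_unit h2 hu
  have h4 : IsUnit ((2 : ℕ) : ZMod n) := by exact_mod_cast h3
  rw [ZMod.isUnit_iff_coprime, hn, Nat.coprime_pow_right_iff (by omega)] at h4
  norm_num at h4

lemma main_count {n m d : ℕ} [NeZero n] (hn : n = 2 ^ m) (w : Fin d → ZMod n) (hw : w ≠ 0)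
    (R : ℕ) :
    n ^ d * ((GLs n d).filter (fun M => linf (M.mulVec w) ≤ R)).card ≤
      2 * (3 * R) ^ d * (GLs n d).card := by
  obtain ⟨s, hs, u, rfl, a, ha⟩ := decomp hn w hw
  have hm : 1 ≤ m := by omega
  simp only [Matrix.mulVec_smul]
  by_cases hR : 2 ^ s ≤ R
  · set V := (univ.filter (fun v : Fin d → ZMod n => linf ((2 : ZMod n) ^ s • v) ≤ R))
    have hV : V.card ≤ (3 * R) ^ d := count_all hn hs.le R hR
    set E := (GLs n d).filter (fun M => linf ((2 : ZMod n) ^ s • M.mulVec u) ≤ R) with hE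
    have h1 : E.card = ∑ v ∈ V, (E.filter (fun M => M.mulVec u = v)).card :=
      card_eq_sum_card_fiberwise (fun M hM => by
        have := (mem_filter.1 (mem_coe.1 hM)).2
        exact mem_coe.2 (mem_filter.2 ⟨mem_univ _, this⟩))
    rw [h1, mul_sum]
    calc _ ≤ ∑ v ∈ V, 2 * (GLs n d).card := by
          apply sum_le_sum
          intro v _
          by_cases hv : ∃ c, IsUnit (v c)
          · obtain ⟨c, hc⟩ := hv
            refine le_trans ?_ (card_fiber hn hm c u v hc)
            exact Nat.mul_le_mul_left _ (card_le_card (filter_subset_filter _ (filter_subset _ _)))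
          · have : E.filter (fun M => M.mulVec u = v) = ∅ := by
              rw [filter_eq_empty_iff]
              rintro M hM rfl
              exact hv (exists_unit_mulVec hn hm M (mem_filter.1 hM).1 u a ha)
            rw [this]; simp
      _ = V.card * (2 * (GLs n d).card) := by rw [sum_const, smul_eq_mul]
      _ ≤ (3 * R) ^ d * (2 * (GLs n d).card) := Nat.mul_le_mul_right _ hV
      _ = _ := by ring
  · have : (GLs n d).filter (fun M => linf ((2 : ZMod n) ^ s • M.mulVec u) ≤ R) = ∅ := by
      rw [filter_eq_empty_iff]
      intro M hM hl
      obtain ⟨c, hc⟩ := exists_unit_mulVec hn hm M hM u a ha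
      have h1 := circ_big hn hs _ ((odd_iff_unit hn hm _).2 hc)
      have h2 : circAbs n (((2 : ZMod n) ^ s • M.mulVec u) c) ≤ R :=
        (le_sup (f := fun c => circAbs n (((2 : ZMod n) ^ s • M.mulVec u) c)) (mem_univ c)).trans hl
      simp only [Pi.smul_apply, smul_eq_mul] at h2
      omega
    rw [this]; simp

lemma circAbs_eq {n : ℕ} [NeZero n] (x : ZMod n) : circAbs n x = x.valMinAbs.natAbs :=
  (ZMod.valMinAbs_natAbs_eq_min x).symm

lemma circAbs_add {n : ℕ} [NeZero n] (x y : ZMod n) :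
    circAbs n (x + y) ≤ circAbs n x + circAbs n y := by
  rw [circAbs_eq, circAbs_eq, circAbs_eq]
  exact (ZMod.natAbs_valMinAbs_add_le x y).trans (Int.natAbs_add_le _ _)

lemma close_of_ball {n d : ℕ} [NeZero n] (nb t : ℕ) (hnb : 1 ≤ nb)
    (M : Matrix (Fin d) (Fin d) (ZMod n)) (q i j : Fin d → ZMod n)
    (h : linf (bucketPt nb (fperm M q i) - fperm M q j) ≤ nb * 2 ^ t) :
    linf (M.mulVec (i - j)) ≤ nb * 2 ^ (t + 1) := by
  unfold linf at h ⊢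
  rw [Finset.sup_le_iff] at h ⊢
  intro s hs
  have h1 := h s hs
  set v := fperm M q i with hv
  have e : M.mulVec (i - j) s = (v s - bucketPt nb v s) + (bucketPt nb v - fperm M q j) s := by
    have : M.mulVec (i - j) = v - fperm M q j := by
      rw [hv]; unfold fperm; rw [← Matrix.mulVec_sub]; congr 1; abel
    rw [this]; simp
  have e2 : v s - bucketPt nb v s = (((v s).val % nb : ℕ) : ZMod n) := by
    rw [sub_eq_iff_eq_add]
    unfold bucketPt
    rw [← Nat.cast_add, add_comm, Nat.div_add_mod, ZMod.natCast_zmod_val]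
  have h2 : circAbs n (v s - bucketPt nb v s) ≤ nb := by
    rw [e2]
    unfold circAbs
    refine (min_le_left _ _).trans ?_
    rw [ZMod.val_natCast]
    exact (Nat.mod_le _ _).trans (Nat.mod_lt _ hnb).le
  rw [e]
  refine (circAbs_add _ _).trans ?_
  have h3 : 1 ≤ 2 ^ t := Nat.one_le_two_pow
  rw [pow_succ]
  nlinarith

lemma markov {n m d k b : ℕ} [NeZero n] (hn : n = 2 ^ m) (hb : b ∣ n)
    (S : Finset (Fin d → ZMod n)) (hS : S.card ≤ 2 * k) (i : Fin d → ZMod n) (t : ℕ) (τ : ℝ)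
    (hτ : 0 < τ) :
    (((GLs n d ×ˢ (univ : Finset (Fin d → ZMod n))).filter (fun p =>
      τ < ((((S.erase i).image (fun j => fperm p.1 p.2 j)) ∩
        ballInf (bucketPt (n / b) (fperm p.1 p.2 i)) (((n : ℝ) / b) * 2 ^ t)).card : ℝ))).card : ℝ)
      * τ ≤ ((2 * k) * (2 * (3 * (n / b * 2 ^ (t + 1))) ^ d * (GLs n d).card) : ℕ) := by
  have hnpos : 0 < n := Nat.pos_of_ne_zero (NeZero.ne n)
  have hbpos : 0 < b := Nat.pos_of_dvd_of_pos hb hnpos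
  have hnb : 1 ≤ n / b := Nat.div_pos (Nat.le_of_dvd hnpos hb) hbpos
  set R := n / b * 2 ^ (t + 1) with hR
  set G := GLs n d ×ˢ (univ : Finset (Fin d → ZMod n)) with hG
  have hcnt : ∀ p ∈ G, (((S.erase i).image (fun j => fperm p.1 p.2 j)) ∩
        ballInf (bucketPt (n / b) (fperm p.1 p.2 i)) (((n : ℝ) / b) * 2 ^ t)).card ≤
        ((S.erase i).filter (fun j => linf (p.1.mulVec (i - j)) ≤ R)).card := by
    intro p _
    refine le_trans (card_le_card ?_) (card_image_le (f := fun j => fperm p.1 p.2 j))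
    intro y hy
    rw [mem_inter, mem_image] at hy
    obtain ⟨⟨j, hj, rfl⟩, hy⟩ := hy
    rw [mem_image]
    refine ⟨j, mem_filter.2 ⟨hj, close_of_ball _ t hnb p.1 p.2 i j ?_⟩, rfl⟩
    have := (mem_filter.1 hy).2
    rw [← Nat.cast_div hb (by positivity)] at this
    exact_mod_cast this
  have hsum : ∑ p ∈ G, ((S.erase i).filter (fun j => linf (p.1.mulVec (i - j)) ≤ R)).card ≤
      (2 * k) * (2 * (3 * R) ^ d * (GLs n d).card) := by
    simp only [card_filter]
    rw [sum_comm]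
    calc _ ≤ ∑ j ∈ S.erase i, (2 * (3 * R) ^ d * (GLs n d).card) := by
          apply sum_le_sum
          intro j hj
          refine le_trans (le_of_eq ?_) (main_count hn (i - j)
            (sub_ne_zero.2 (ne_of_mem_erase hj).symm) R)
          rw [hG, sum_product, card_filter, mul_sum]
          apply sum_congr rfl
          intro M _
          dsimp only
          by_cases hl : linf (M.mulVec (i - j)) ≤ R
          · simp [hl, ZMod.card]
          · simp [hl]
      _ = (S.erase i).card * (2 * (3 * R) ^ d * (GLs n d).card) := by
          rw [sum_const, smul_eq_mul]
      _ ≤ _ := Nat.mul_le_mul_right _ ((card_le_card (erase_subset _ _)).trans hS)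
  set A := G.filter (fun p =>
      τ < ((((S.erase i).image (fun j => fperm p.1 p.2 j)) ∩
        ballInf (bucketPt (n / b) (fperm p.1 p.2 i)) (((n : ℝ) / b) * 2 ^ t)).card : ℝ)) with hA
  calc (A.card : ℝ) * τ = ∑ p ∈ A, τ := by rw [sum_const, nsmul_eq_mul]
    _ ≤ ∑ p ∈ A, (((S.erase i).filter (fun j => linf (p.1.mulVec (i - j)) ≤ R)).card : ℝ) := by
        apply sum_le_sum
        intro p hp
        have hp := mem_filter.1 hp
        exact hp.2.le.trans (by exact_mod_cast hcnt p hp.1)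
    _ ≤ ∑ p ∈ G, (((S.erase i).filter (fun j => linf (p.1.mulVec (i - j)) ≤ R)).card : ℝ) :=
        sum_le_sum_of_subset_of_nonneg (filter_subset _ _) (fun _ _ _ => by positivity)
    _ ≤ _ := by exact_mod_cast hsum

lemma const_bound (d F : ℕ) (hd : 1 ≤ d) (hF : 2 * d ≤ F) :
    (16 : ℝ) * 3 ^ d ≤ (2 * Real.pi) ^ (3 * F * d) := by
  have hpi := Real.pi_gt_three
  have h1 : (2 * Real.pi) ^ (3 * d) ≤ (2 * Real.pi) ^ (3 * F * d) := by
    apply pow_le_pow_right₀ (by linarith)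
    nlinarith [Nat.zero_le d]
  refine le_trans ?_ h1
  have h2 : (6 : ℝ) ^ (3 * d) ≤ (2 * Real.pi) ^ (3 * d) := by
    apply pow_le_pow_left₀ (by norm_num); linarith
  refine le_trans ?_ h2
  have h3 : (16 : ℝ) ≤ 16 ^ d := le_self_pow₀ (by norm_num) (by omega)
  calc (16 : ℝ) * 3 ^ d ≤ 16 ^ d * 3 ^ d := by gcongr
    _ = 48 ^ d := by rw [← mul_pow]; norm_num
    _ ≤ (6 ^ 3) ^ d := by gcongr; norm_num
    _ = _ := by rw [← pow_mul]

theorem stmt3 :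
    ∃ α₀ ∈ Set.Ioo (0 : ℝ) 1,
      ∀ (n : ℕ) [NeZero n] (d m k b mb F : ℕ) (α : ℝ)
        (S : Finset (Fin d → ZMod n)) (i : Fin d → ZMod n),
        n = 2 ^ m → 1 ≤ d → 1 ≤ k → S.card ≤ 2 * k →
        α ∈ Set.Ioo 0 α₀ → 2 * d ≤ F → b = 2 ^ mb → b ∣ n →
        (2 * Real.pi) ^ (4 * F * d) * k / α ^ d ≤ (b : ℝ) ^ d →
        1 - Real.sqrt α / 2 ≤
          ((univ.filter
              (fun p : Matrix (Fin d) (Fin d) (ZMod n) × (Fin d → ZMod n) =>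
                Odd (Matrix.det p.1).val ∧ isolatedUnder b F α S p.1 p.2 i)).card : ℝ)
          / ((univ.filter
              (fun p : Matrix (Fin d) (Fin d) (ZMod n) × (Fin d → ZMod n) =>
                Odd (Matrix.det p.1).val)).card : ℝ) := by
  refine ⟨1 / 2, by norm_num, ?_⟩
  intro n _ d m k b mb F α S i hn hd hk hS hα hF hb hbn hB
  obtain ⟨hα0, hα1⟩ := hα
  have hαle : α ≤ 1 := by linarith
  have hpi := Real.pi_gt_three
  have hnpos : 0 < n := Nat.pos_of_ne_zero (NeZero.ne n)
  have hbpos : 0 < b := Nat.pos_of_dvd_of_pos hbn hnpos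
  have hbR : (0 : ℝ) < b := by exact_mod_cast hbpos
  have hnR : (0 : ℝ) < n := by exact_mod_cast hnpos
  have hkR : (1 : ℝ) ≤ k := by exact_mod_cast hk
  set P : ℝ := (2 * Real.pi) ^ (F * d) with hP
  have hP0 : 0 < P := by positivity
  have hP4 : (2 * Real.pi) ^ (4 * F * d) = P ^ 4 := by
    rw [hP, ← pow_mul]; congr 1; ring
  have hP3 : (16 : ℝ) * 3 ^ d ≤ P ^ 3 := by
    have := const_bound d F hd hF
    rwa [show 3 * F * d = F * d * 3 by ring, pow_mul] at this
  set β : ℝ := α ^ ((d : ℝ) / 2) with hβ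
  have hβ0 : 0 < β := Real.rpow_pos_of_pos hα0 _
  have hβ2 : α ^ d = β * β := by
    rw [hβ, ← Real.rpow_add hα0, add_halves, Real.rpow_natCast]
  have hβs : β ≤ Real.sqrt α := by
    rw [Real.sqrt_eq_rpow, hβ]
    apply Real.rpow_le_rpow_of_exponent_ge hα0 hαle
    have : (1 : ℝ) ≤ d := by exact_mod_cast hd
    linarith
  rw [hP4, div_le_iff₀ (by positivity), hβ2] at hB
  -- n is at least 2
  have hm : 1 ≤ m := by
    by_contra h
    have hm0 : m = 0 := by omega
    rw [hm0, pow_zero] at hn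
    have hb1 : b = 1 := by rw [hn] at hbn; exact Nat.dvd_one.1 hbn
    have h1 : (1 : ℝ) ≤ 3 ^ d := one_le_pow₀ (by norm_num)
    have h2 : 1 < P ^ 4 := by
      have h16 : (1 : ℝ) < P ^ 3 := by linarith
      have : 1 < P := by
        by_contra hc
        have := pow_le_one₀ (n := 3) hP0.le (not_lt.1 hc)
        linarith
      exact one_lt_pow₀ this (by norm_num)
    have h3 : β * β ≤ 1 := by rw [← hβ2]; exact pow_le_one₀ hα0.le hαle
    rw [hb1] at hB
    simp only [Nat.cast_one, one_pow, one_mul] at hB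
    nlinarith
  have h1n : 1 < n := by rw [hn]; exact Nat.one_lt_two_pow (by omega)
  set G := GLs n d ×ˢ (univ : Finset (Fin d → ZMod n)) with hG
  have hGcard : G.card = (GLs n d).card * n ^ d := by
    rw [hG, card_product, card_univ, Fintype.card_fun, ZMod.card, Fintype.card_fin]
  have hGL : 0 < (GLs n d).card := by
    rw [card_pos]
    refine ⟨1, mem_filter.2 ⟨mem_univ _, ?_⟩⟩
    rw [Matrix.det_one, odd_iff_unit hn hm]
    exact isUnit_one
  have hGLR : (0 : ℝ) < (GLs n d).card := by exact_mod_cast hGL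
  have hGR : (0 : ℝ) < G.card := by rw [hGcard]; push_cast; positivity
  have e1 : (univ.filter
      (fun p : Matrix (Fin d) (Fin d) (ZMod n) × (Fin d → ZMod n) =>
        Odd (Matrix.det p.1).val)) = G := by
    ext p; simp [hG, GLs]
  have e2 : (univ.filter
      (fun p : Matrix (Fin d) (Fin d) (ZMod n) × (Fin d → ZMod n) =>
        Odd (Matrix.det p.1).val ∧ isolatedUnder b F α S p.1 p.2 i)) =
      G.filter (fun p => isolatedUnder b F α S p.1 p.2 i) := by
    ext p; simp [hG, GLs]
  rw [e1, e2, le_div_iff₀ hGR]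
  have hsplit := card_filter_add_card_filter_not (s := G)
    (fun p => isolatedUnder b F α S p.1 p.2 i)
  set bad := G.filter (fun p => ¬ isolatedUnder b F α S p.1 p.2 i) with hbad
  suffices hmain : (bad.card : ℝ) ≤ Real.sqrt α / 2 * G.card by
    have : ((G.filter (fun p => isolatedUnder b F α S p.1 p.2 i)).card : ℝ) + bad.card
      = G.card := by exact_mod_cast hsplit
    linarith
  set τ : ℕ → ℝ := fun t => P⁻¹ * β * 2 ^ ((t + 1) * d) * 2 ^ t with hτ
  have hτ0 : ∀ t, 0 < τ t := fun t => by rw [hτ]; positivity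
  set A : ℕ → Finset (Matrix (Fin d) (Fin d) (ZMod n) × (Fin d → ZMod n)) := fun t =>
    G.filter (fun p =>
      τ t < ((((S.erase i).image (fun j => fperm p.1 p.2 j)) ∩
        ballInf (bucketPt (n / b) (fperm p.1 p.2 i)) (((n : ℝ) / b) * 2 ^ t)).card : ℝ)) with hA
  have hAt : ∀ t, ((A t).card : ℝ) ≤ (Real.sqrt α / 4 * G.card) * (1 / 2) ^ t := by
    intro t
    have hmk := markov (k := k) hn hbn S hS i t (τ t) (hτ0 t)
    rw [← le_div_iff₀ (hτ0 t)] at hmk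
    refine hmk.trans ?_
    rw [div_le_iff₀ (hτ0 t), hGcard]
    push_cast
    rw [Nat.cast_div hbn (by positivity)]
    have e3 : (3 * ((n : ℝ) / b * 2 ^ (t + 1))) ^ d =
        3 ^ d * ((n : ℝ) ^ d / b ^ d) * 2 ^ ((t + 1) * d) := by
      rw [mul_pow, mul_pow, div_pow, ← pow_mul]; ring
    have e4 : (1 / 2 : ℝ) ^ t * 2 ^ t = 1 := by rw [← mul_pow]; norm_num
    have key : 4 * (k : ℝ) * 3 ^ d / b ^ d ≤ Real.sqrt α / 4 * (P⁻¹ * β) := by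
      rw [div_le_iff₀ (by positivity)]
      have hB' : P ^ 4 * k / (β * β) ≤ b ^ d := by
        rw [div_le_iff₀ (by positivity)]; exact hB
      calc 4 * (k : ℝ) * 3 ^ d = (16 * 3 ^ d) * (k / 4) := by ring
        _ ≤ P ^ 3 * (k / 4) := by gcongr
        _ = β / 4 * (P⁻¹ * β) * (P ^ 4 * k / (β * β)) := by field_simp
        _ ≤ Real.sqrt α / 4 * (P⁻¹ * β) * b ^ d := by gcongr
    calc _ = (4 * (k : ℝ) * 3 ^ d / b ^ d) *
            ((n : ℝ) ^ d * 2 ^ ((t + 1) * d) * (GLs n d).card) := by rw [e3]; ring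
      _ ≤ (Real.sqrt α / 4 * (P⁻¹ * β)) *
            ((n : ℝ) ^ d * 2 ^ ((t + 1) * d) * (GLs n d).card) := by gcongr
      _ = (Real.sqrt α / 4 * (P⁻¹ * β)) *
            ((n : ℝ) ^ d * 2 ^ ((t + 1) * d) * (GLs n d).card) * ((1 / 2 : ℝ) ^ t * 2 ^ t) := by
            rw [e4, mul_one]
      _ = _ := by rw [hτ]; ring
  have hex : ∀ p : Matrix (Fin d) (Fin d) (ZMod n) × (Fin d → ZMod n),
      ∃ t, p ∈ bad → p ∈ A t := by
    intro p
    by_cases hp : p ∈ bad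
    · have h1 := mem_filter.1 hp
      have h2 := h1.2
      unfold isolatedUnder at h2
      push Not at h2
      obtain ⟨t, ht⟩ := h2
      exact ⟨t, fun _ => mem_filter.2 ⟨h1.1, ht⟩⟩
    · exact ⟨0, fun h => absurd h hp⟩
  choose f hf using hex
  set T := bad.sup f + 1 with hT
  have hsub : bad ⊆ (range T).biUnion A := by
    intro p hp
    rw [mem_biUnion]
    exact ⟨f p, mem_range.2 (Nat.lt_succ_of_le (le_sup (f := f) hp)), hf p hp⟩
  have hgeo : ∑ t ∈ range T, (1 / 2 : ℝ) ^ t ≤ 2 := by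
    have h := geom_sum_eq (show (1 / 2 : ℝ) ≠ 1 by norm_num) T
    rw [h]
    have : (0 : ℝ) ≤ (1 / 2) ^ T := by positivity
    rw [div_le_iff_of_neg (by norm_num)]
    linarith
  have hc0 : 0 ≤ Real.sqrt α / 4 * G.card := by positivity
  calc (bad.card : ℝ) ≤ ((∑ t ∈ range T, (A t).card : ℕ) : ℝ) := by
        exact_mod_cast (card_le_card hsub).trans card_biUnion_le
    _ = ∑ t ∈ range T, ((A t).card : ℝ) := by push_cast; rfl
    _ ≤ ∑ t ∈ range T, (Real.sqrt α / 4 * G.card) * (1 / 2) ^ t :=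
        sum_le_sum fun t _ => hAt t
    _ = (Real.sqrt α / 4 * G.card) * ∑ t ∈ range T, (1 / 2 : ℝ) ^ t := by rw [mul_sum]
    _ ≤ (Real.sqrt α / 4 * G.card) * 2 := mul_le_mul_of_nonneg_left hgeo hc0
    _ = _ := by ring
end

section
/- There are absolute constants α₀ ∈ (0,1) and c > 0 such that the following holds. Let k ≥ 1 be an integer, let S ⊆ [n]^d with |S| ≤ 2k, let α ∈ (0, α₀), F ≥ 2d, and B = b^d ≥ (2π)^{4F·d} · k/α^d with b a power of 2 dividing n. Let H_1,…,H_{r_max} be independent random hashings, H_r = (π_{Σ_r,q_r}, B, F) with each Σ_r uniform on M_{d×d} and each q_r uniform on [n]^d safely independently. Then for every fixed i ∈ [n]^d, with probability at least 1 − 2^{−c·√α·r_max}, the element i is isolated (with respect to S, at parameter α) under at least (1 − √α)·r_max of the hashings H_1,…,H_{r_max}. -/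
/- STATEMENT 4: There are absolute constants α₀ ∈ (0,1) and c > 0 such that: for k ≥ 1,
   S ⊆ [n]^d with |S| ≤ 2k, α ∈ (0,α₀), F ≥ 2d, B = b^d ≥ (2π)^{4Fd}·k/α^d, if
   H_1,…,H_{r_max} are independent random hashings (Σ_r uniform on M_{d×d}, q_r uniform
   on [n]^d, independently), then every fixed i ∈ [n]^d is, with probability at least
   1 − 2^{−c·√α·r_max}, isolated (w.r.t. S at α) under ≥ (1−√α)·r_max of the hashings. -/

open scoped BigOperators Classical
open Finset

lemma h_tri {n : ℕ} [NeZero n] (a b : ZMod n) : circAbs n (a + b) ≤ circAbs n a + circAbs n b := by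
  unfold circAbs
  rw [← ZMod.valMinAbs_natAbs_eq_min, ← ZMod.valMinAbs_natAbs_eq_min, ← ZMod.valMinAbs_natAbs_eq_min]
  exact (ZMod.natAbs_valMinAbs_add_le a b).trans (Int.natAbs_add_le _ _)

lemma h_neg {n : ℕ} [NeZero n] (a : ZMod n) : circAbs n (-a) = circAbs n a := by
  unfold circAbs
  rw [← ZMod.valMinAbs_natAbs_eq_min, ← ZMod.valMinAbs_natAbs_eq_min]
  exact ZMod.natAbs_valMinAbs_neg a

lemma h_val_unit {m : ℕ} (x : ZMod (2 ^ m)) (hx : ¬ (2 : ZMod (2 ^ m)) ∣ x) : IsUnit x := by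
  have hodd : ¬ 2 ∣ x.val := by
    rintro ⟨y, hy⟩
    apply hx
    refine ⟨(y : ZMod (2 ^ m)), ?_⟩
    rw [← ZMod.natCast_zmod_val x, hy]
    push_cast
    rfl
  rw [← ZMod.natCast_zmod_val x, ZMod.isUnit_iff_coprime]
  apply Nat.Coprime.pow_right
  rw [Nat.coprime_comm]
  exact (Nat.Prime.coprime_iff_not_dvd Nat.prime_two).2 hodd

lemma h_valuation {m d : ℕ} (v : Fin d → ZMod (2 ^ m)) (hv : v ≠ 0) :
    ∃ s, s < m ∧ (∀ l, (2 : ZMod (2 ^ m)) ^ s ∣ v l) ∧ ∃ p c, c * v p = 2 ^ s := by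
  have hm : ¬ ∀ l, (2 : ZMod (2 ^ m)) ^ m ∣ v l := by
    intro h
    apply hv
    funext l
    have h0 : (2 : ZMod (2 ^ m)) ^ m = 0 := by
      have := ZMod.natCast_self (2 ^ m)
      push_cast at this
      exact this
    have := h l
    rw [h0, zero_dvd_iff] at this
    exact this
  have hex : ∃ s, ¬ ∀ l, (2 : ZMod (2 ^ m)) ^ s ∣ v l := ⟨m, hm⟩
  have hs := Nat.find_spec hex
  have hpos : Nat.find hex ≠ 0 := by
    intro h
    rw [h] at hs
    apply hs
    intro l
    simp
  obtain ⟨s, hse⟩ := Nat.exists_eq_succ_of_ne_zero hpos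
  have hmin : ∀ l, (2 : ZMod (2 ^ m)) ^ s ∣ v l := by
    have := Nat.find_min hex (m := s) (by omega)
    push Not at this
    exact this
  have hle : Nat.find hex ≤ m := Nat.find_min' hex hm
  rw [hse] at hs
  push Not at hs
  obtain ⟨p, hp⟩ := hs
  obtain ⟨x, hx⟩ := hmin p
  have hxu : IsUnit x := by
    apply h_val_unit
    rintro ⟨y, rfl⟩
    apply hp
    rw [hx]
    exact ⟨y, by rw [pow_succ]; ring⟩
  obtain ⟨u, rfl⟩ := hxu
  refine ⟨s, by omega, hmin, p, ((u⁻¹ : (ZMod (2 ^ m))ˣ) : ZMod (2 ^ m)), ?_⟩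
  rw [hx, mul_left_comm]
  simp

lemma h_val_dvd {m s : ℕ} (hs : s ≤ m) (x : ZMod (2 ^ m)) (hx : (2 : ZMod (2 ^ m)) ^ s ∣ x) :
    2 ^ s ∣ x.val := by
  obtain ⟨y, rfl⟩ := hx
  have : (2 : ZMod (2 ^ m)) ^ s * y = ((2 ^ s * y.val : ℕ) : ZMod (2 ^ m)) := by
    push_cast; simp
  rw [this, ZMod.val_natCast]
  exact (Nat.dvd_mod_iff (pow_dvd_pow 2 hs)).2 (Dvd.intro _ rfl)

lemma h_count1 {m s r : ℕ} (hs : s ≤ m) (x : ZMod (2 ^ m)) :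
    ((range (2 ^ (m - s))).filter (fun j : ℕ => (x - (j : ZMod (2 ^ m)) * 2 ^ s).val ≤ r)).card
      ≤ r / 2 ^ s + 1 := by
  rw [← Finset.card_range (r / 2 ^ s + 1)]
  apply Finset.card_le_card_of_injOn (fun j : ℕ => (x - (j : ZMod (2 ^ m)) * 2 ^ s).val / 2 ^ s)
  · intro j hj
    simp only [coe_filter, Finset.mem_range, Set.mem_ofPred_eq, coe_range, Set.mem_Iio] at hj ⊢
    exact Nat.lt_succ_of_le (Nat.div_le_div_right hj.2)
  · intro j hj j' hj' hEq
    simp only [coe_filter, Finset.mem_range, Set.mem_ofPred_eq] at hj hj' hEq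
    set A := x - (j : ZMod (2 ^ m)) * 2 ^ s with hA
    set B := x - (j' : ZMod (2 ^ m)) * 2 ^ s with hB
    have key : A.val % 2 ^ s = B.val % 2 ^ s := by
      have h1 : A.val ≡ (B + ((j':ZMod (2^m)) - j) * 2 ^ s).val [MOD 2 ^ s] := by
        have : A = B + ((j':ZMod (2^m)) - j) * 2 ^ s := by rw [hA, hB]; ring
        rw [this]
      have h2 : (B + ((j':ZMod (2^m)) - j) * 2 ^ s).val ≡ B.val [MOD 2 ^ s] := by
        rw [ZMod.val_add]
        have h3 := h_val_dvd hs (((j':ZMod (2^m)) - j) * 2 ^ s) (Dvd.intro_left _ rfl)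
        have h4 : (B.val + (((j':ZMod (2^m)) - j) * 2 ^ s).val) % 2 ^ m ≡
            (B.val + (((j':ZMod (2^m)) - j) * 2 ^ s).val) [MOD 2 ^ s] :=
          (Nat.mod_modEq _ _).of_dvd (pow_dvd_pow 2 hs)
        refine h4.trans ?_
        have := (Nat.modEq_zero_iff_dvd.2 h3)
        simpa using this.add_left B.val
      exact h1.trans h2
    have hv : A.val = B.val := by
      rw [← Nat.div_add_mod A.val (2 ^ s), ← Nat.div_add_mod B.val (2 ^ s), key, hEq]
    have hAB : A = B := ZMod.val_injective _ hv
    have hj3 : ((j * 2 ^ s : ℕ) : ZMod (2 ^ m)) = ((j' * 2 ^ s : ℕ) : ZMod (2 ^ m)) := by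
      push_cast
      rw [hA, hB] at hAB
      exact sub_right_injective hAB
    rw [ZMod.natCast_eq_natCast_iff] at hj3
    have hms : 2 ^ m = 2 ^ (m - s) * 2 ^ s := by rw [← pow_add, Nat.sub_add_cancel hs]
    have hp : 0 < 2 ^ s := by positivity
    have := hj3.eq_of_lt_of_lt (by rw [hms]; exact Nat.mul_lt_mul_of_pos_right hj.1 hp)
      (by rw [hms]; exact Nat.mul_lt_mul_of_pos_right hj'.1 hp)
    exact Nat.eq_of_mul_eq_mul_right hp this

lemma h_circ_or {n : ℕ} [NeZero n] (x : ZMod n) (r : ℕ) (h : circAbs n x ≤ r) :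
    x.val ≤ r ∨ (-x).val ≤ r := by
  unfold circAbs at h
  rcases min_le_iff.1 h with h | h
  · exact Or.inl h
  · right
    rw [ZMod.neg_val]
    split_ifs
    · simp
    · exact h

lemma h_circ_of {n : ℕ} [NeZero n] (x : ZMod n) (D : ℕ) (hD : D ∣ n) (h : D ∣ x.val)
    (hlt : circAbs n x < D) : x = 0 := by
  unfold circAbs at hlt
  have hl := ZMod.val_lt x
  rcases min_lt_iff.1 hlt with h1 | h1
  · exact (ZMod.val_eq_zero x).1 (Nat.eq_zero_of_dvd_of_lt h h1)
  · have := Nat.eq_zero_of_dvd_of_lt (Nat.dvd_sub hD h) h1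
    omega

lemma h_count2 {m s r : ℕ} (hs : s ≤ m) (x : ZMod (2 ^ m)) :
    ((range (2 ^ (m - s))).filter
      (fun j : ℕ => circAbs (2 ^ m) (x - (j : ZMod (2 ^ m)) * 2 ^ s) ≤ r)).card
      ≤ 2 * (r / 2 ^ s + 1) := by
  -- split by sign
  have hsub : ((range (2 ^ (m - s))).filter
      (fun j : ℕ => circAbs (2 ^ m) (x - (j : ZMod (2 ^ m)) * 2 ^ s) ≤ r)) ⊆
      ((range (2 ^ (m - s))).filter (fun j : ℕ => (x - (j : ZMod (2 ^ m)) * 2 ^ s).val ≤ r)) ∪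
      ((range (2 ^ (m - s))).filter (fun j : ℕ => (-(x - (j : ZMod (2 ^ m)) * 2 ^ s)).val ≤ r)) := by
    intro j hj
    simp only [Finset.mem_union, Finset.mem_filter] at hj ⊢
    rcases h_circ_or _ _ hj.2 with h | h
    · exact Or.inl ⟨hj.1, h⟩
    · exact Or.inr ⟨hj.1, h⟩
  refine (card_le_card hsub).trans ((card_union_le _ _).trans ?_)
  have h1 := h_count1 (r := r) hs x
  have h2 : ((range (2 ^ (m - s))).filter
      (fun j : ℕ => (-(x - (j : ZMod (2 ^ m)) * 2 ^ s)).val ≤ r)).card ≤ r / 2 ^ s + 1 := by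
    rw [← Finset.card_range (r / 2 ^ s + 1)]
    rw [Finset.card_range]
    have h3 := h_count1 (r := r) hs (-x + ((2 ^ (m - s) - 1 : ℕ) : ZMod (2 ^ m)) * 2 ^ s)
    refine le_trans ?_ h3
    apply Finset.card_le_card_of_injOn (fun j : ℕ => 2 ^ (m - s) - 1 - j)
    · intro j hj
      simp only [coe_filter, Finset.mem_range, Set.mem_ofPred_eq] at hj ⊢
      refine ⟨by omega, ?_⟩
      have : (-x + ((2 ^ (m - s) - 1 : ℕ) : ZMod (2 ^ m)) * 2 ^ s
        - ((2 ^ (m - s) - 1 - j : ℕ) : ZMod (2 ^ m)) * 2 ^ s) = -(x - (j : ZMod (2 ^ m)) * 2 ^ s) := by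
        rw [Nat.cast_sub (n := 2 ^ (m - s) - 1) (m := j) (by omega)]
        ring
      rw [this]
      exact hj.2
    · intro j hj j' hj' h
      simp only [coe_filter, Finset.mem_range, Set.mem_ofPred_eq] at hj hj' h
      omega
  omega

lemma h_row {m s r d : ℕ} (hs : s ≤ m) (hr : 2 ^ s ≤ r) (v : Fin d → ZMod (2 ^ m))
    (p : Fin d) (c : ZMod (2 ^ m)) (hc : c * v p = 2 ^ s) :
    2 ^ m * (univ.filter (fun ρ : Fin d → ZMod (2 ^ m) => circAbs (2 ^ m) (ρ ⬝ᵥ v) ≤ r)).card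
      ≤ 4 * r * Fintype.card (Fin d → ZMod (2 ^ m)) := by
  set K := (univ.filter (fun ρ : Fin d → ZMod (2 ^ m) => circAbs (2 ^ m) (ρ ⬝ᵥ v) ≤ r)).card
    with hK
  let w : Fin d → ZMod (2 ^ m) := Pi.single p c
  have hw : w ⬝ᵥ v = 2 ^ s := by simp [w, hc]
  have h1 : ∀ j : ℕ, (univ.filter (fun ρ : Fin d → ZMod (2 ^ m) =>
      circAbs (2 ^ m) (ρ ⬝ᵥ v - (j : ZMod (2 ^ m)) * 2 ^ s) ≤ r)).card = K := by
    intro j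
    apply Finset.card_bij (fun ρ _ => ρ - (j : ZMod (2 ^ m)) • w)
    · intro ρ hρ
      simp only [Finset.mem_filter, Finset.mem_univ, true_and] at hρ ⊢
      rw [sub_dotProduct, smul_dotProduct, hw]
      exact hρ
    · intro a _ b _ h
      exact sub_left_injective h
    · intro ρ hρ
      simp only [Finset.mem_filter, Finset.mem_univ, true_and] at hρ
      refine ⟨ρ + (j : ZMod (2 ^ m)) • w, ?_, by simp⟩
      simp only [Finset.mem_filter, Finset.mem_univ, true_and]
      rw [add_dotProduct, smul_dotProduct, hw]
      simpa using hρ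
  have h2 : 2 ^ (m - s) * K ≤ Fintype.card (Fin d → ZMod (2 ^ m)) * (2 * (r / 2 ^ s + 1)) := by
    calc 2 ^ (m - s) * K = ∑ j ∈ range (2 ^ (m - s)), (univ.filter (fun ρ : Fin d → ZMod (2 ^ m) =>
      circAbs (2 ^ m) (ρ ⬝ᵥ v - (j : ZMod (2 ^ m)) * 2 ^ s) ≤ r)).card := by
          rw [Finset.sum_congr rfl (fun j _ => h1 j)]; simp
      _ = ∑ ρ : Fin d → ZMod (2 ^ m), ((range (2 ^ (m - s))).filter
      (fun j : ℕ => circAbs (2 ^ m) (ρ ⬝ᵥ v - (j : ZMod (2 ^ m)) * 2 ^ s) ≤ r)).card := by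
          simp only [Finset.card_filter]
          rw [Finset.sum_comm]
      _ ≤ ∑ ρ : Fin d → ZMod (2 ^ m), (2 * (r / 2 ^ s + 1)) :=
          Finset.sum_le_sum (fun ρ _ => h_count2 hs _)
      _ = _ := by rw [Finset.sum_const, Finset.card_univ, smul_eq_mul]
  have h3 : 2 ^ s * (2 * (r / 2 ^ s + 1)) ≤ 4 * r := by
    have := Nat.mul_div_le r (2 ^ s)
    nlinarith
  have hms : 2 ^ m = 2 ^ s * 2 ^ (m - s) := by rw [← pow_add, Nat.add_sub_cancel' hs]
  calc 2 ^ m * K = 2 ^ s * (2 ^ (m - s) * K) := by rw [hms, mul_assoc]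
    _ ≤ 2 ^ s * (Fintype.card (Fin d → ZMod (2 ^ m)) * (2 * (r / 2 ^ s + 1))) :=
        Nat.mul_le_mul_left _ h2
    _ = (2 ^ s * (2 * (r / 2 ^ s + 1))) * Fintype.card (Fin d → ZMod (2 ^ m)) := by ring
    _ ≤ _ := Nat.mul_le_mul_right _ h3

lemma h_odd_unit {m d : ℕ} (M : Matrix (Fin d) (Fin d) (ZMod (2 ^ m))) (h : Odd M.det.val) :
    IsUnit M.det := by
  rw [← ZMod.natCast_zmod_val M.det, ZMod.isUnit_iff_coprime]
  exact Nat.Coprime.pow_right _ (Nat.coprime_two_right.2 h)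

lemma h_mat {m r d : ℕ} (v : Fin d → ZMod (2 ^ m)) (hv : v ≠ 0) :
    (2 ^ m) ^ d * (univ.filter (fun M : Matrix (Fin d) (Fin d) (ZMod (2 ^ m)) =>
      Odd M.det.val ∧ linf (M.mulVec v) ≤ r)).card
      ≤ (4 * r) ^ d * Fintype.card (Matrix (Fin d) (Fin d) (ZMod (2 ^ m))) := by
  obtain ⟨s, hs, hdvd, p, c, hc⟩ := h_valuation v hv
  rcases lt_or_ge r (2 ^ s) with hr | hr
  · have : (univ.filter (fun M : Matrix (Fin d) (Fin d) (ZMod (2 ^ m)) =>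
      Odd M.det.val ∧ linf (M.mulVec v) ≤ r)) = ∅ := by
      apply Finset.filter_eq_empty_iff.2
      rintro M - ⟨hM, hl⟩
      have hz : M.mulVec v = 0 := by
        funext l
        apply h_circ_of _ (2 ^ s) (pow_dvd_pow 2 hs.le)
        · apply h_val_dvd hs.le
          have : M.mulVec v l = ∑ l', M l l' * v l' := rfl
          rw [this]
          exact Finset.dvd_sum (fun l' _ => Dvd.dvd.mul_left (hdvd l') _)
        · refine lt_of_le_of_lt ?_ hr
          exact (Finset.le_sup (f := fun s => circAbs (2 ^ m) (M.mulVec v s))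
            (Finset.mem_univ l)).trans hl
      apply hv
      have hu := (Matrix.isUnit_iff_isUnit_det M).2 (h_odd_unit M hM)
      apply Matrix.mulVec_injective_of_isUnit hu
      simpa using hz
    rw [this]
    simp
  · have hrow := h_row hs.le hr v p c hc
    set K := (univ.filter (fun ρ : Fin d → ZMod (2 ^ m) => circAbs (2 ^ m) (ρ ⬝ᵥ v) ≤ r))
    have hle : (univ.filter (fun M : Matrix (Fin d) (Fin d) (ZMod (2 ^ m)) =>
      Odd M.det.val ∧ linf (M.mulVec v) ≤ r)).card ≤ K.card ^ d := by
      have hpi : (Fintype.piFinset (fun _ : Fin d => K)).card = K.card ^ d := by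
        simp
      rw [← hpi]
      apply Finset.card_le_card_of_injOn (fun M => fun l => M l)
      · intro M hM
        simp only [coe_filter, Finset.mem_univ, true_and, Set.mem_ofPred_eq] at hM
        rw [Finset.mem_coe, Fintype.mem_piFinset]
        intro l
        simp only [K, Finset.mem_filter, Finset.mem_univ, true_and]
        exact (Finset.le_sup (f := fun s => circAbs (2 ^ m) (M.mulVec v s))
            (Finset.mem_univ l)).trans hM.2
      · intro a _ b _ h
        exact h
    have hcard : Fintype.card (Matrix (Fin d) (Fin d) (ZMod (2 ^ m)))
        = Fintype.card (Fin d → ZMod (2 ^ m)) ^ d := by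
      have : Fintype.card (Fin d → (Fin d → ZMod (2 ^ m))) =
        Fintype.card (Fin d → ZMod (2 ^ m)) ^ d := by
          rw [Fintype.card_fun, Fintype.card_fin]
      rw [← this]
      exact Fintype.card_congr (Equiv.refl _)
    calc _ ≤ (2 ^ m) ^ d * K.card ^ d := Nat.mul_le_mul_left _ hle
      _ = (2 ^ m * K.card) ^ d := by rw [mul_pow]
      _ ≤ (4 * r * Fintype.card (Fin d → ZMod (2 ^ m))) ^ d := Nat.pow_le_pow_left hrow _
      _ = _ := by rw [mul_pow, hcard]

lemma h_gl {m d : ℕ} (hm : m ≠ 0) :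
    Fintype.card (Matrix (Fin d) (Fin d) (ZMod (2 ^ m))) ≤
      (univ.filter (fun M : Matrix (Fin d) (Fin d) (ZMod (2 ^ m)) => Odd M.det.val)).card
        * 2 ^ (d * d) := by
  have h2 : (2 ^ (d * d)) = (univ : Finset (Fin d → Fin d → ZMod 2)).card := by
    simp [Finset.card_univ, ZMod.card, pow_mul]
  rw [h2, ← Finset.card_product, ← Finset.card_univ]
  have hdvd : 2 ∣ 2 ^ m := dvd_pow_self 2 hm
  let φ : ZMod (2 ^ m) →+* ZMod 2 := ZMod.castHom hdvd (ZMod 2)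
  have hφ : ∀ x, φ x = (x.val : ZMod 2) := by
    intro x
    conv_lhs => rw [← ZMod.natCast_zmod_val x]
    rw [map_natCast]
  let L : ZMod 2 → ZMod (2 ^ m) := fun e => (e.val : ZMod (2 ^ m))
  have hL : ∀ e, φ (L e) = e := by
    intro e
    simp only [L, map_natCast, ZMod.natCast_zmod_val]
  apply Finset.card_le_card_of_injOn (fun M => ((Matrix.of fun a b => M a b - L (φ (M a b))) + 1,
    fun a b => φ (M a b)))
  · intro M _
    simp only [coe_product, Set.mem_prod, coe_filter, Finset.mem_univ, true_and, Set.mem_ofPred_eq,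
      coe_univ, Set.mem_univ, and_true]
    rw [← ZMod.natCast_eq_one_iff_odd, ← hφ, RingHom.map_det]
    have : φ.mapMatrix ((Matrix.of fun a b => M a b - L (φ (M a b))) + 1) = 1 := by
      rw [map_add, map_one]
      have : φ.mapMatrix (Matrix.of fun a b => M a b - L (φ (M a b))) = 0 := by
        ext a b
        simp [hL]
      rw [this, zero_add]
    rw [this, Matrix.det_one]
  · intro M _ M' _ h
    simp only [Prod.mk.injEq] at h
    obtain ⟨h1, h2⟩ := h
    ext a b
    have h5 := add_right_cancel h1
    have h3 := congrFun (congrFun h5 a) b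
    have h4 := congrFun (congrFun h2 a) b
    simp only [Matrix.of_apply] at h3 h4
    rw [h4] at h3
    exact sub_left_injective h3

lemma h_chernoff {Ω : Type*} [Fintype Ω] (P Q : Ω → Prop) (R : ℕ) (a : ℝ)
    (ha : 0 ≤ a)
    (hbad : ((univ.filter (fun ω => P ω ∧ ¬ Q ω)).card : ℝ) ≤
      a / 10 * ((univ.filter (fun ω => P ω)).card : ℝ))
    (hpos : 0 < (univ.filter (fun ω => P ω)).card) :
    1 - (2 : ℝ) ^ (-(1 * a * R)) ≤
      ((univ.filter (fun H : Fin R → Ω => (∀ r, P (H r)) ∧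
        (1 - a) * R ≤ ((univ.filter (fun r => Q (H r))).card : ℝ))).card : ℝ) /
      ((univ.filter (fun H : Fin R → Ω => ∀ r, P (H r))).card : ℝ) := by
  set N := (univ.filter (fun ω => P ω)).card with hN
  have hpi : (univ.filter (fun H : Fin R → Ω => ∀ r, P (H r))) =
      Fintype.piFinset (fun _ : Fin R => univ.filter (fun ω => P ω)) := by
    ext H
    simp [Fintype.mem_piFinset]
  have hT : (univ.filter (fun H : Fin R → Ω => ∀ r, P (H r))).card = N ^ R := by
    rw [hpi]; simp [hN]
  have hNpos : (0 : ℝ) < (N : ℝ) ^ R := by positivity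
  -- exponential moment
  have hexp : ∑ H ∈ univ.filter (fun H : Fin R → Ω => ∀ r, P (H r)),
      ∏ r, (if Q (H r) then (1 : ℝ) else 4) ≤ (N : ℝ) ^ R * Real.exp (3 / 10 * a * R) := by
    rw [hpi]
    rw [← Finset.prod_univ_sum (fun _ : Fin R => univ.filter (fun ω => P ω))
      (fun _ ω => if Q ω then (1 : ℝ) else 4)]
    rw [Finset.prod_const, Finset.card_univ, Fintype.card_fin]
    have h1 : ∑ ω ∈ univ.filter (fun ω => P ω), (if Q ω then (1 : ℝ) else 4)
        = N + 3 * ((univ.filter (fun ω => P ω ∧ ¬ Q ω)).card : ℝ) := by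
      have : ∀ ω, (if Q ω then (1 : ℝ) else 4) = 1 + 3 * (if ¬ Q ω then (1 : ℝ) else 0) := by
        intro ω
        by_cases h : Q ω <;> simp [h]; norm_num
      rw [Finset.sum_congr rfl (fun ω _ => this ω), Finset.sum_add_distrib, ← Finset.mul_sum,
        Finset.sum_boole, Finset.filter_filter]
      simp [hN]
    rw [h1]
    have h2 : (N : ℝ) + 3 * ((univ.filter (fun ω => P ω ∧ ¬ Q ω)).card : ℝ) ≤
        N * Real.exp (3 / 10 * a) := by
      have := Real.add_one_le_exp (3 / 10 * a)
      have hN0 : (0 : ℝ) ≤ N := by positivity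
      nlinarith
    calc _ ≤ ((N : ℝ) * Real.exp (3 / 10 * a)) ^ R := by
          apply pow_le_pow_left₀ (by positivity) h2
      _ = _ := by rw [mul_pow, ← Real.exp_nat_mul]; ring_nf
  have hbadc : ((univ.filter (fun H : Fin R → Ω => (∀ r, P (H r)) ∧
        ¬ ((1 - a) * R ≤ ((univ.filter (fun r => Q (H r))).card : ℝ)))).card : ℝ) *
        (4 : ℝ) ^ (a * R) ≤ (N : ℝ) ^ R * Real.exp (3 / 10 * a * R) := by
    refine le_trans ?_ hexp
    rw [← nsmul_eq_mul, ← Finset.sum_const]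
    refine le_trans (Finset.sum_le_sum (g := fun H => ∏ r, (if Q (H r) then (1 : ℝ) else 4)) ?_) ?_
    · intro H hH
      simp only [Finset.mem_filter, Finset.mem_univ, true_and, not_le] at hH
      have h3 : ∏ r, (if Q (H r) then (1 : ℝ) else 4) =
          (4 : ℝ) ^ ((univ.filter (fun r => ¬ Q (H r))).card) := by
        rw [Finset.prod_ite]; simp
      rw [h3, ← Real.rpow_natCast]
      apply Real.rpow_le_rpow_of_exponent_le (by norm_num)
      have h4 := Finset.card_filter_add_card_filter_not (s := (univ : Finset (Fin R)))
        (fun r => Q (H r))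
      rw [Finset.card_univ, Fintype.card_fin] at h4
      have h5 : ((univ.filter (fun r => Q (H r))).card : ℝ) +
        ((univ.filter (fun r => ¬ Q (H r))).card : ℝ) = R := by exact_mod_cast h4
      linarith [hH.2]
    · apply Finset.sum_le_sum_of_subset_of_nonneg
      · intro H hH
        simp only [Finset.mem_filter, Finset.mem_univ, true_and] at hH ⊢
        exact hH.1
      · intro H _ _
        apply Finset.prod_nonneg
        intro r _
        split_ifs <;> norm_num
  have hsplit := Finset.card_filter_add_card_filter_not
    (s := univ.filter (fun H : Fin R → Ω => ∀ r, P (H r)))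
    (fun H => (1 - a) * R ≤ ((univ.filter (fun r => Q (H r))).card : ℝ))
  rw [Finset.filter_filter, Finset.filter_filter, hT] at hsplit
  rw [hT]
  set G := (univ.filter (fun H : Fin R → Ω => (∀ r, P (H r)) ∧
        (1 - a) * R ≤ ((univ.filter (fun r => Q (H r))).card : ℝ))).card
  set Bd := (univ.filter (fun H : Fin R → Ω => (∀ r, P (H r)) ∧
        ¬ ((1 - a) * R ≤ ((univ.filter (fun r => Q (H r))).card : ℝ)))).card
  have hs' : (G : ℝ) + Bd = (N : ℝ) ^ R := by exact_mod_cast hsplit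
  push_cast
  rw [le_div_iff₀ hNpos]
  have hx : 0 ≤ a * R := by positivity
  have he : Real.exp (3 / 10 * a * R) ≤ (2 : ℝ) ^ (a * R) := by
    rw [Real.rpow_def_of_pos (by norm_num)]
    apply Real.exp_le_exp.2
    have := Real.log_two_gt_d9
    nlinarith
  have h4 : (4 : ℝ) ^ (a * R) = (2 : ℝ) ^ (a * R) * (2 : ℝ) ^ (a * R) := by
    rw [← Real.mul_rpow (by norm_num) (by norm_num)]; norm_num
  have hp : 0 < (2 : ℝ) ^ (a * R) := by positivity
  rw [h4] at hbadc
  have h6 : (Bd : ℝ) * (2 : ℝ) ^ (a * R) ≤ (N : ℝ) ^ R := by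
    have : (Bd : ℝ) * (2 : ℝ) ^ (a * R) * (2 : ℝ) ^ (a * R) ≤ (N : ℝ) ^ R * (2 : ℝ) ^ (a * R) := by
      rw [mul_assoc]
      exact hbadc.trans (mul_le_mul_of_nonneg_left he hNpos.le)
    exact le_of_mul_le_mul_right this hp
  rw [one_mul, Real.rpow_neg (by norm_num)]
  have h7 : (Bd : ℝ) ≤ ((2 : ℝ) ^ (a * R))⁻¹ * (N : ℝ) ^ R := by
    rw [← div_eq_inv_mul, le_div_iff₀ hp]; exact h6
  linarith

lemma h_incl {n d : ℕ} [NeZero n] (b g t : ℕ) (hb : 0 < b) (hbg : b * g = n)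
    (S : Finset (Fin d → ZMod n)) (M : Matrix (Fin d) (Fin d) (ZMod n))
    (q i : Fin d → ZMod n) :
    (((S.erase i).image (fun j => fperm M q j)) ∩
        ballInf (bucketPt (n / b) (fperm M q i)) (((n : ℝ) / b) * 2 ^ t)).card ≤
    ((S.erase i).filter (fun j => linf (M.mulVec (i - j)) ≤ g * 2 ^ (t + 1))).card := by
  refine le_trans (card_le_card ?_)
    (card_image_le (f := fun j => fperm M q j)
      (s := (S.erase i).filter (fun j => linf (M.mulVec (i - j)) ≤ g * 2 ^ (t + 1))))
  intro y hy
  rw [Finset.mem_inter, Finset.mem_image] at hy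
  obtain ⟨⟨j, hj, rfl⟩, hball⟩ := hy
  rw [Finset.mem_image]
  refine ⟨j, ?_, rfl⟩
  rw [Finset.mem_filter]
  refine ⟨hj, ?_⟩
  have hnb : n / b = g := by rw [← hbg]; exact Nat.mul_div_cancel_left g hb
  have hg : 0 < g := by
    rcases Nat.eq_zero_or_pos g with h | h
    · exfalso; rw [h] at hbg; exact NeZero.ne n (by simpa using hbg.symm)
    · exact h
  have hnr : (n : ℝ) / b = g := by
    rw [← hbg]; push_cast; field_simp
  unfold ballInf at hball
  rw [Finset.mem_filter, hnb, hnr] at hball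
  have hball2 : linf (bucketPt g (fperm M q i) - fperm M q j) ≤ g * 2 ^ t := by
    exact_mod_cast hball.2
  apply Finset.sup_le
  intro l _
  have e : M.mulVec (i - j) l = (fperm M q i l - bucketPt g (fperm M q i) l) +
      (bucketPt g (fperm M q i) - fperm M q j) l := by
    have : i - j = (i - q) - (j - q) := by abel
    rw [this, Matrix.mulVec_sub]
    simp only [fperm, Pi.sub_apply]
    ring
  rw [e]
  have h1 : circAbs n ((bucketPt g (fperm M q i) - fperm M q j) l) ≤ g * 2 ^ t :=
    (Finset.le_sup (f := fun s => circAbs n ((bucketPt g (fperm M q i) - fperm M q j) s))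
      (Finset.mem_univ l)).trans hball2
  have h2 : circAbs n (fperm M q i l - bucketPt g (fperm M q i) l) ≤ g := by
    set x := fperm M q i l with hx
    have h3 : x - bucketPt g (fperm M q i) l = ((x.val % g : ℕ) : ZMod n) := by
      unfold bucketPt
      rw [← hx]
      have h4 := congrArg (Nat.cast (R := ZMod n)) (Nat.div_add_mod x.val g)
      rw [ZMod.natCast_zmod_val, Nat.cast_add] at h4
      rw [sub_eq_iff_eq_add, add_comm]
      exact h4.symm
    rw [h3]
    unfold circAbs
    refine (min_le_left _ _).trans ?_
    exact ((ZMod.val_natCast n _).trans_le (Nat.mod_le _ _)).trans (Nat.mod_lt _ hg).le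
  have h5 : 1 ≤ 2 ^ t := Nat.one_le_two_pow
  have h6 : g ≤ g * 2 ^ t := Nat.le_mul_of_pos_right _ h5
  refine (h_tri _ _).trans ?_
  rw [pow_succ]
  linarith

lemma h_markov {m d : ℕ} (hm : m ≠ 0) (k r : ℕ) (S : Finset (Fin d → ZMod (2 ^ m)))
    (hS : S.card ≤ 2 * k) (i : Fin d → ZMod (2 ^ m)) (T : ℝ) :
    ((2 : ℝ) ^ m) ^ d * (T * ((univ.filter (fun M : Matrix (Fin d) (Fin d) (ZMod (2 ^ m)) =>
      Odd M.det.val ∧ T < (((S.erase i).filter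
        (fun j => linf (M.mulVec (i - j)) ≤ r)).card : ℝ))).card : ℝ)) ≤
    2 * k * ((4 * r) ^ d * (2 ^ (d * d) *
      ((univ.filter (fun M : Matrix (Fin d) (Fin d) (ZMod (2 ^ m)) => Odd M.det.val)).card : ℝ))) := by
  set N := (univ.filter (fun M : Matrix (Fin d) (Fin d) (ZMod (2 ^ m)) => Odd M.det.val)).card
  have hA : T * ((univ.filter (fun M : Matrix (Fin d) (Fin d) (ZMod (2 ^ m)) =>
      Odd M.det.val ∧ T < (((S.erase i).filter
        (fun j => linf (M.mulVec (i - j)) ≤ r)).card : ℝ))).card : ℝ) ≤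
      ∑ j ∈ S.erase i, ((univ.filter (fun M : Matrix (Fin d) (Fin d) (ZMod (2 ^ m)) =>
      Odd M.det.val ∧ linf (M.mulVec (i - j)) ≤ r)).card : ℝ) := by
    calc _ = ∑ M ∈ (univ.filter (fun M : Matrix (Fin d) (Fin d) (ZMod (2 ^ m)) =>
      Odd M.det.val ∧ T < (((S.erase i).filter
        (fun j => linf (M.mulVec (i - j)) ≤ r)).card : ℝ))), T := by
          rw [Finset.sum_const, nsmul_eq_mul, mul_comm]
      _ ≤ ∑ M ∈ (univ.filter (fun M : Matrix (Fin d) (Fin d) (ZMod (2 ^ m)) =>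
      Odd M.det.val ∧ T < (((S.erase i).filter
        (fun j => linf (M.mulVec (i - j)) ≤ r)).card : ℝ))), (((S.erase i).filter
        (fun j => linf (M.mulVec (i - j)) ≤ r)).card : ℝ) := by
          apply Finset.sum_le_sum
          intro M hM
          rw [Finset.mem_filter] at hM
          exact hM.2.2.le
      _ ≤ ∑ M ∈ (univ.filter (fun M : Matrix (Fin d) (Fin d) (ZMod (2 ^ m)) =>
      Odd M.det.val)), (((S.erase i).filter
        (fun j => linf (M.mulVec (i - j)) ≤ r)).card : ℝ) := by
          apply Finset.sum_le_sum_of_subset_of_nonneg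
          · intro M hM
            simp only [Finset.mem_filter, Finset.mem_univ, true_and] at hM ⊢
            exact hM.1
          · intro _ _ _
            positivity
      _ = _ := by
          simp only [← Finset.filter_filter]
          simp only [Finset.card_filter _ (S.erase i), Finset.card_filter _ (filter _ univ)]
          push_cast
          rw [Finset.sum_comm]
  have hj : ∀ j ∈ S.erase i, ((2 : ℝ) ^ m) ^ d *
      ((univ.filter (fun M : Matrix (Fin d) (Fin d) (ZMod (2 ^ m)) =>
      Odd M.det.val ∧ linf (M.mulVec (i - j)) ≤ r)).card : ℝ) ≤
      (4 * r) ^ d * (2 ^ (d * d) * (N : ℝ)) := by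
    intro j hj
    have hne : i - j ≠ 0 := sub_ne_zero.2 (Finset.ne_of_mem_erase hj).symm
    have h1 := h_mat (r := r) (i - j) hne
    have h2 := h_gl (d := d) hm
    have h3 := h1.trans (Nat.mul_le_mul_left _ h2)
    rw [mul_comm _ (2 ^ (d * d))] at h3
    exact_mod_cast h3
  calc _ ≤ ((2 : ℝ) ^ m) ^ d * ∑ j ∈ S.erase i,
        ((univ.filter (fun M : Matrix (Fin d) (Fin d) (ZMod (2 ^ m)) =>
      Odd M.det.val ∧ linf (M.mulVec (i - j)) ≤ r)).card : ℝ) :=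
        mul_le_mul_of_nonneg_left hA (by positivity)
    _ ≤ ∑ j ∈ S.erase i, (4 * (r : ℝ)) ^ d * (2 ^ (d * d) * (N : ℝ)) := by
        rw [Finset.mul_sum]
        exact Finset.sum_le_sum hj
    _ = ((S.erase i).card : ℝ) * ((4 * (r : ℝ)) ^ d * (2 ^ (d * d) * (N : ℝ))) := by
        rw [Finset.sum_const, nsmul_eq_mul]
    _ ≤ _ := by
        apply mul_le_mul_of_nonneg_right _ (by positivity)
        have : (S.erase i).card ≤ 2 * k := (Finset.card_erase_le).trans hS
        exact_mod_cast this

lemma h_X {d F : ℕ} (hd : 1 ≤ d) (hF : 2 * d ≤ F) :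
    40 * (4 ^ d * 2 ^ (d * d)) ≤ (((2 * Real.pi) ^ (F * d) : ℝ)) ^ 3 ∧
    1 ≤ (((2 * Real.pi) ^ (F * d) : ℝ)) := by
  have hpi : (6 : ℝ) ≤ 2 * Real.pi := by linarith [Real.pi_gt_three]
  have h1 : (1 : ℝ) ≤ 2 * Real.pi := by linarith
  refine ⟨?_, one_le_pow₀ h1⟩
  have h2 : ((6 : ℝ) ^ (2 * (d * d))) ≤ (2 * Real.pi) ^ (F * d) :=
    (pow_le_pow_left₀ (by norm_num) hpi _).trans (pow_le_pow_right₀ h1 (by nlinarith))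
  have h3 : (46656 : ℝ) ^ (d * d) ≤ ((2 * Real.pi) ^ (F * d)) ^ 3 := by
    have : (46656 : ℝ) ^ (d * d) = ((6 : ℝ) ^ (2 * (d * d))) ^ 3 := by
      rw [← pow_mul, show 2 * (d * d) * 3 = 6 * (d * d) by ring, pow_mul 6 6 (d * d)]; norm_num
    rw [this]
    exact pow_le_pow_left₀ (by positivity) h2 3
  refine le_trans ?_ h3
  have hdd : d * d ≠ 0 := by positivity
  have h4 : (40 : ℝ) ≤ 40 ^ (d * d) := le_self_pow₀ (by norm_num) hdd
  have h5 : (4 : ℝ) ^ d ≤ 4 ^ (d * d) := pow_le_pow_right₀ (by norm_num) (by nlinarith)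
  calc (40 : ℝ) * (4 ^ d * 2 ^ (d * d)) ≤ 40 ^ (d * d) * (4 ^ (d * d) * 2 ^ (d * d)) := by gcongr
    _ = 320 ^ (d * d) := by rw [← mul_pow, ← mul_pow]; norm_num
    _ ≤ _ := pow_le_pow_left₀ (by norm_num) (by norm_num) _

set_option maxHeartbeats 2000000 in
lemma h_single {m d : ℕ} (k b mb F : ℕ) (α : ℝ)
    (S : Finset (Fin d → ZMod (2 ^ m))) (i : Fin d → ZMod (2 ^ m))
    (hd : 1 ≤ d) (hk : 1 ≤ k) (hS : S.card ≤ 2 * k) (hα : 0 < α) (hα1 : α < 1)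
    (hF : 2 * d ≤ F) (hb : b = 2 ^ mb) (hbn : b ∣ 2 ^ m)
    (hB : (2 * Real.pi) ^ (4 * F * d) * k / α ^ d ≤ (b : ℝ) ^ d) :
    m ≠ 0 ∧ ((univ.filter (fun H : Matrix (Fin d) (Fin d) (ZMod (2 ^ m)) × (Fin d → ZMod (2 ^ m)) =>
      Odd (H.1.det).val ∧ ¬ isolatedUnder b F α S H.1 H.2 i)).card : ℝ) ≤
      Real.sqrt α / 10 *
      ((univ.filter (fun H : Matrix (Fin d) (Fin d) (ZMod (2 ^ m)) × (Fin d → ZMod (2 ^ m)) =>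
      Odd (H.1.det).val)).card : ℝ) := by
  obtain ⟨hX3, hX1⟩ := h_X hd hF
  have hb0 : 0 < b := by rw [hb]; positivity
  obtain ⟨g, hg⟩ := hbn
  have hg0 : 0 < g := by
    rcases Nat.eq_zero_or_pos g with h | h
    · rw [h] at hg; exact absurd hg (by simp)
    · exact h
  set β := α ^ ((d : ℝ) / 2) with hβ
  have hβ0 : 0 < β := Real.rpow_pos_of_pos hα _
  have hβ2 : α ^ d = β ^ 2 := by
    rw [hβ, ← Real.rpow_natCast, ← Real.rpow_natCast, ← Real.rpow_mul hα.le]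
    congr 1; push_cast; ring
  have hβs : β ≤ Real.sqrt α := by
    rw [hβ, Real.sqrt_eq_rpow]
    apply Real.rpow_le_rpow_of_exponent_ge hα hα1.le
    have : (1 : ℝ) ≤ d := by exact_mod_cast hd
    linarith
  have hβ1 : β ≤ 1 := hβs.trans (Real.sqrt_le_one.2 hα1.le)
  set X := ((2 * Real.pi) ^ (F * d) : ℝ) with hX
  have hX0 : 0 < X := by linarith
  have hX4 : (2 * Real.pi) ^ (4 * F * d) = X ^ 4 := by
    rw [hX, ← pow_mul]; congr 1; ring
  rw [hX4, hβ2, div_le_iff₀ (by positivity)] at hB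
  have hk1 : (1 : ℝ) ≤ k := by exact_mod_cast hk
  have hbm : (b : ℝ) ≤ 2 ^ m := by
    have : b ≤ 2 ^ m := by rw [hg]; exact Nat.le_mul_of_pos_right _ hg0
    exact_mod_cast this
  have hm : m ≠ 0 := by
    rintro rfl
    have h1 : (b : ℝ) ^ d ≤ 1 := pow_le_one₀ (by positivity) (by simpa using hbm)
    have h2 : X ^ 4 * k ≤ 1 := by
      refine hB.trans ?_
      exact mul_le_one₀ h1 (by positivity) (pow_le_one₀ hβ0.le hβ1)
    have h3 : (40 : ℝ) ≤ X ^ 3 := by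
      refine le_trans ?_ hX3
      have h4 : (1 : ℝ) ≤ 4 ^ d := one_le_pow₀ (by norm_num)
      have h5 : (1 : ℝ) ≤ 2 ^ (d * d) := one_le_pow₀ (by norm_num)
      nlinarith
    have h6 : (40 : ℝ) ≤ X ^ 4 := by nlinarith
    nlinarith
  refine ⟨hm, ?_⟩
  set N := (univ.filter (fun M : Matrix (Fin d) (Fin d) (ZMod (2 ^ m)) => Odd M.det.val)).card with hN
  let thr : ℕ → ℝ := fun t => X⁻¹ * β * 2 ^ ((t + 1) * d) * 2 ^ t
  let cnt : ℕ → Matrix (Fin d) (Fin d) (ZMod (2 ^ m)) → ℕ := fun t M =>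
    ((S.erase i).filter (fun j => linf (M.mulVec (i - j)) ≤ g * 2 ^ (t + 1))).card
  let A : ℕ → Finset (Matrix (Fin d) (Fin d) (ZMod (2 ^ m))) := fun t =>
    univ.filter (fun M => Odd M.det.val ∧ thr t < (cnt t M : ℝ))
  have hthr : ∀ t, 0 < thr t := fun t => by positivity
  have hlarge : ∀ t, m ≤ t → (2 * k : ℝ) ≤ thr t := by
    intro t ht
    have h1 : (b : ℝ) ^ d ≤ 2 ^ (t * d) := by
      rw [pow_mul]
      exact pow_le_pow_left₀ (by positivity)
        (hbm.trans (pow_le_pow_right₀ (by norm_num) ht)) _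
    have h2 : (k : ℝ) * X ≤ 2 ^ (t * d) * β := by
      have h3 : X ≤ X ^ 4 := le_self_pow₀ hX1 (by norm_num)
      have h4 : β ^ 2 ≤ β := by nlinarith
      calc (k : ℝ) * X ≤ k * X ^ 4 := by gcongr
        _ ≤ (b : ℝ) ^ d * β ^ 2 := by rw [mul_comm]; exact hB
        _ ≤ _ := by gcongr
    have h5 : (2 : ℝ) ≤ 2 ^ d * 2 ^ t := by
      have h6 : (2 : ℝ) ≤ 2 ^ d := le_self_pow₀ (by norm_num) (by omega)
      have h7 : (1 : ℝ) ≤ 2 ^ t := one_le_pow₀ (by norm_num)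
      nlinarith
    have h8 : thr t = (2 ^ (t * d) * β / X) * (2 ^ d * 2 ^ t) := by
      simp only [thr]
      rw [add_mul, one_mul, pow_add]; field_simp
    rw [h8]
    have h9 : (k : ℝ) ≤ 2 ^ (t * d) * β / X := by rw [le_div_iff₀ hX0]; exact h2
    calc (2 * k : ℝ) = k * 2 := by ring
      _ ≤ _ := by gcongr
  have hAt : ∀ t, ((A t).card : ℝ) ≤ Real.sqrt α / 20 * (1 / 2) ^ t * N := by
    intro t
    have h1 := h_markov hm k (g * 2 ^ (t + 1)) S hS i (thr t)
    rw [← hN] at h1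
    change ((2 : ℝ) ^ m) ^ d * (thr t * ((A t).card : ℝ)) ≤ _ at h1
    have hgr : (2 : ℝ) ^ m = b * g := by exact_mod_cast hg
    have hgR : (0 : ℝ) < g := by exact_mod_cast hg0
    have hbR : (0 : ℝ) < b := by exact_mod_cast hb0
    have e1 : ((2 : ℝ) ^ m) ^ d * (thr t * ((A t).card : ℝ)) =
        ((g : ℝ) ^ d * 2 ^ (t * d) * 2 ^ d) * (b ^ d * β / X * 2 ^ t * ((A t).card : ℝ)) := by
      rw [hgr]; simp only [thr]
      rw [add_mul, one_mul, pow_add, mul_pow]; field_simp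
    have e2 : 2 * (k : ℝ) * ((4 * ((g * 2 ^ (t + 1) : ℕ) : ℝ)) ^ d * (2 ^ (d * d) * (N : ℝ))) =
        ((g : ℝ) ^ d * 2 ^ (t * d) * 2 ^ d) * (2 * k * (4 ^ d * 2 ^ (d * d)) * N) := by
      push_cast
      rw [mul_pow, mul_pow, ← pow_mul, add_mul, one_mul, pow_add]; ring
    rw [e1, e2] at h1
    have h2 := le_of_mul_le_mul_left h1 (by positivity)
    -- combine
    have hN0 : (0 : ℝ) ≤ N := by positivity
    have h3 : 2 * k * (4 ^ d * 2 ^ (d * d)) * N ≤ (b ^ d * β / X) * (Real.sqrt α / 20 * N) := by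
      have h4 : (k : ℝ) * X ^ 3 ≤ b ^ d * β / X * β := by
        rw [div_mul_eq_mul_div, le_div_iff₀ hX0]
        nlinarith [hB]
      have h5 : (k : ℝ) * (40 * (4 ^ d * 2 ^ (d * d))) ≤ b ^ d * β / X * Real.sqrt α :=
        calc (k : ℝ) * (40 * (4 ^ d * 2 ^ (d * d))) ≤ k * X ^ 3 := by gcongr
          _ ≤ b ^ d * β / X * β := h4
          _ ≤ _ := by gcongr
      nlinarith [mul_le_mul_of_nonneg_right h5 hN0]
    have h6 := h2.trans h3
    have hP : 0 < b ^ d * β / X := by positivity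
    rw [mul_assoc (b ^ d * β / X)] at h6
    have h7 := le_of_mul_le_mul_left h6 hP
    have h8 : ((A t).card : ℝ) = (1 / 2) ^ t * (2 ^ t * ((A t).card : ℝ)) := by
      rw [← mul_assoc, ← mul_pow]; norm_num
    rw [h8]
    calc _ ≤ (1 / 2 : ℝ) ^ t * (Real.sqrt α / 20 * N) := by gcongr
      _ = _ := by ring
  have hsum : ∑ t ∈ range m, (1 / 2 : ℝ) ^ t ≤ 2 := sum_geometric_two_le m
  set Q := (univ : Finset (Fin d → ZMod (2 ^ m)))
  have hprod : (univ.filter (fun H : Matrix (Fin d) (Fin d) (ZMod (2 ^ m)) × (Fin d → ZMod (2 ^ m)) =>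
      Odd (H.1.det).val)).card = N * Q.card := by
    rw [hN, ← Finset.card_product]
    congr 1
    ext H
    simp [Q]
  have hsub : (univ.filter (fun H : Matrix (Fin d) (Fin d) (ZMod (2 ^ m)) × (Fin d → ZMod (2 ^ m)) =>
      Odd (H.1.det).val ∧ ¬ isolatedUnder b F α S H.1 H.2 i)) ⊆
      ((range m).biUnion A) ×ˢ Q := by
    intro H hH
    rw [Finset.mem_filter] at hH
    obtain ⟨-, hodd, hni⟩ := hH
    unfold isolatedUnder at hni
    push Not at hni
    obtain ⟨t, ht⟩ := hni
    have hc := h_incl b g t hb0 hg.symm S H.1 H.2 i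
    have hc' : thr t < (cnt t H.1 : ℝ) := lt_of_lt_of_le ht (by exact_mod_cast hc)
    have htm : t < m := by
      by_contra hcon
      have h1 := hlarge t (not_lt.1 hcon)
      have h2 : cnt t H.1 ≤ 2 * k :=
        (Finset.card_filter_le _ _).trans ((Finset.card_erase_le).trans hS)
      have h3 : (cnt t H.1 : ℝ) ≤ 2 * k := by exact_mod_cast h2
      linarith
    rw [Finset.mem_product]
    refine ⟨?_, Finset.mem_univ _⟩
    rw [Finset.mem_biUnion]
    refine ⟨t, Finset.mem_range.2 htm, ?_⟩
    simp only [A, Finset.mem_filter, Finset.mem_univ, true_and]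
    exact ⟨hodd, hc'⟩
  have hc1 := card_le_card hsub
  rw [Finset.card_product] at hc1
  have hc2 := hc1.trans (Nat.mul_le_mul_right Q.card (Finset.card_biUnion_le (s := range m) (t := A)))
  rw [hprod]
  have hA2 : ((∑ t ∈ range m, (A t).card : ℕ) : ℝ) ≤ Real.sqrt α / 10 * N := by
    push_cast
    calc ∑ t ∈ range m, ((A t).card : ℝ) ≤ ∑ t ∈ range m, Real.sqrt α / 20 * (1 / 2) ^ t * N :=
          Finset.sum_le_sum (fun t _ => hAt t)
      _ = Real.sqrt α / 20 * N * ∑ t ∈ range m, (1 / 2 : ℝ) ^ t := by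
          rw [Finset.mul_sum]; exact Finset.sum_congr rfl (fun t _ => by ring)
      _ ≤ Real.sqrt α / 20 * N * 2 := by gcongr
      _ = _ := by ring
  have hc3 : ((univ.filter (fun H : Matrix (Fin d) (Fin d) (ZMod (2 ^ m)) × (Fin d → ZMod (2 ^ m)) =>
      Odd (H.1.det).val ∧ ¬ isolatedUnder b F α S H.1 H.2 i)).card : ℝ) ≤
      ((∑ t ∈ range m, (A t).card : ℕ) : ℝ) * Q.card := by exact_mod_cast hc2
  refine hc3.trans ?_
  push_cast [← mul_assoc] at hA2 ⊢
  exact mul_le_mul_of_nonneg_right hA2 (by positivity)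

theorem stmt4 :
    ∃ α₀ ∈ Set.Ioo (0 : ℝ) 1, ∃ c : ℝ, 0 < c ∧
      ∀ (n : ℕ) [NeZero n] (d m k b mb F rmax : ℕ) (α : ℝ)
        (S : Finset (Fin d → ZMod n)) (i : Fin d → ZMod n),
        n = 2 ^ m → 1 ≤ d → 1 ≤ k → S.card ≤ 2 * k →
        α ∈ Set.Ioo 0 α₀ → 2 * d ≤ F → b = 2 ^ mb → b ∣ n →
        (2 * Real.pi) ^ (4 * F * d) * k / α ^ d ≤ (b : ℝ) ^ d →
        1 - (2 : ℝ) ^ (-(c * Real.sqrt α * rmax)) ≤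
          ((univ.filter
              (fun H : Fin rmax → Matrix (Fin d) (Fin d) (ZMod n) × (Fin d → ZMod n) =>
                (∀ r, Odd (Matrix.det (H r).1).val) ∧
                (1 - Real.sqrt α) * rmax ≤
                  ((univ.filter (fun r : Fin rmax =>
                      isolatedUnder b F α S (H r).1 (H r).2 i)).card : ℝ))).card : ℝ)
          / ((univ.filter
              (fun H : Fin rmax → Matrix (Fin d) (Fin d) (ZMod n) × (Fin d → ZMod n) =>
                ∀ r, Odd (Matrix.det (H r).1).val)).card : ℝ) := by
  refine ⟨1 / 2, ⟨by norm_num, by norm_num⟩, 1, one_pos, ?_⟩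
  intro n _ d m k b mb F rmax α S i hn hd hk hS hα hF hb hbn hB
  subst hn
  obtain ⟨hm, hbad⟩ := h_single k b mb F α S i hd hk hS hα.1
    (hα.2.trans (by norm_num)) hF hb hbn hB
  have hfin := h_chernoff (Ω := Matrix (Fin d) (Fin d) (ZMod (2 ^ m)) × (Fin d → ZMod (2 ^ m)))
    (fun H => Odd (Matrix.det H.1).val) (fun H => isolatedUnder b F α S H.1 H.2 i)
    rmax (Real.sqrt α) (Real.sqrt_nonneg α) (by convert hbad) (by
    apply Finset.card_pos.2
    refine ⟨(1, 0), ?_⟩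
    refine (@Finset.mem_filter _ _ (_) _ _).2 ⟨Finset.mem_univ _, ?_⟩
    have : Fact (1 < 2 ^ m) := ⟨Nat.one_lt_two_pow hm⟩
    simp [ZMod.val_one])
  convert hfin
end
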